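/- Let k ≥ 3 and 1 ≤ j ≤ k−1 be integers, let ω = log log n, and suppose p satisfies (j·log n − ω)/C(n,k−j) ≤ p ≤ (j·log n + ω)/C(n,k−j). Then with probability at least 1 − 3·n^{−12j/7} (for sufficiently large n), the random hypergraph H^k(n,p) has at most one non-trivial j-component, i.e. at most one j-component containing more than one j-set; equivalently, apart from isolated j-sets, all j-sets lie in a single j-component. -/

import Mathlib

open Filter Asymptotics

open scoped Classical

noncomputable section

/-- The collection of all `k`-element subsets of the vertex set `Fin n`,
    i.e. all potential edges of a `k`-uniform hypergraph on `n` vertices. -/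
def kSets (n k : ℕ) : Finset (Finset (Fin n)) :=
  Finset.powersetCard k (Finset.univ : Finset (Fin n))

/-- The probability that the binomial random `k`-uniform hypergraph `H^k(n,p)`
    (each `k`-set an edge independently with probability `p`) has property `Q`. -/
def binomProb (n k : ℕ) (p : ℝ) (Q : Finset (Finset (Fin n)) → Prop) : ℝ :=
  ∑ H ∈ (kSets n k).powerset,
    (if Q H then p ^ H.card * (1 - p) ^ ((kSets n k).card - H.card) else 0)

/-- The expectation of a real-valued random variable `X` of `H^k(n,p)`. -/
def binomExp (n k : ℕ) (p : ℝ) (X : Finset (Finset (Fin n)) → ℝ) : ℝ :=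
  ∑ H ∈ (kSets n k).powerset,
    p ^ H.card * (1 - p) ^ ((kSets n k).card - H.card) * X H

/-- The degree of a vertex set `J` in the hypergraph with edge set `H`:
    the number of edges containing `J`. -/
def setDegree {n : ℕ} (H : Finset (Finset (Fin n))) (J : Finset (Fin n)) : ℕ :=
  (H.filter (fun e => J ⊆ e)).card

/-- `J` is isolated in `H`: it is contained in no edge. -/
def IsIsolatedSet {n : ℕ} (H : Finset (Finset (Fin n))) (J : Finset (Fin n)) : Prop :=
  ∀ e ∈ H, ¬ J ⊆ e

/-- Two sets `J1`, `J2` are `j`-connected in the hypergraph with edge set `H`: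
    there is a walk of edges from one to the other in which consecutive edges
    intersect in at least `j` vertices. -/
def JConn {n : ℕ} (j : ℕ) (H : Finset (Finset (Fin n))) (J1 J2 : Finset (Fin n)) : Prop :=
  ∃ e1 ∈ H, ∃ e2 ∈ H, J1 ⊆ e1 ∧ J2 ⊆ e2 ∧
    Relation.ReflTransGen (fun e f => e ∈ H ∧ f ∈ H ∧ j ≤ (e ∩ f).card) e1 e2

/-- The hypergraph with edge set `H` is `j`-connected:
    all `j`-sets lie in a single `j`-component, i.e. are pairwise `j`-connected. -/
def JConnectedHG (n j : ℕ) (H : Finset (Finset (Fin n))) : Prop :=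
  ∀ J1 J2 : Finset (Fin n), J1.card = j → J2.card = j → JConn j H J1 J2

/-- `C` is a `j`-component of `H`: a maximal nonempty set of pairwise `j`-connected `j`-sets. -/
def IsJComponent (n j : ℕ) (H : Finset (Finset (Fin n))) (C : Finset (Finset (Fin n))) : Prop :=
  C.Nonempty ∧ (∀ J ∈ C, J.card = j) ∧ (∀ J1 ∈ C, ∀ J2 ∈ C, JConn j H J1 J2) ∧
    ∀ J : Finset (Fin n), J.card = j → (∃ J' ∈ C, JConn j H J J') → J ∈ C

/-- `D_s`: the number of `j`-sets of degree exactly `s`. -/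
def numDegSets (n j s : ℕ) (H : Finset (Finset (Fin n))) : ℕ :=
  ((Finset.powersetCard j (Finset.univ : Finset (Fin n))).filter
    (fun J => setDegree H J = s)).card

/-- The Poisson probability mass function with mean `lam`. -/
def poissonPMF (lam : ℝ) (i : ℕ) : ℝ := Real.exp (-lam) * lam ^ i / (Nat.factorial i)

/-- Total variation distance between the distribution of `D_s` in `H^k(n,p)`
    and the Poisson distribution with mean `lam`. -/
def dTVpoisson (n k j s : ℕ) (p lam : ℝ) : ℝ :=
  (1 / 2) * ∑' i : ℕ, |binomProb n k p (fun H => numDegSets n j s H = i) - poissonPMF lam i|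

/-- The probability that the uniform random hypergraph `H^k(n,M)` (chosen uniformly among
    all `k`-uniform hypergraphs on `Fin n` with exactly `M` edges) has property `Q`. -/
def uniformProb (n k M : ℕ) (Q : Finset (Finset (Fin n)) → Prop) : ℝ :=
  (((Finset.powersetCard M (kSets n k)).filter Q).card : ℝ) /
    ((Finset.powersetCard M (kSets n k)).card : ℝ)



lemma aux_sum_Icc {α : Type*} [DecidableEq α] (M Y : Finset α) (h : M ⊆ Y) (a b : ℝ) :
    ∑ H ∈ Finset.Icc M Y, a ^ (H.card - M.card) * b ^ (Y.card - H.card)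
      = (a + b) ^ (Y.card - M.card) := by
  rw [Finset.Icc_eq_image_powerset h, Finset.sum_image, ← Finset.card_sdiff_of_subset h,
    ← Finset.sum_pow_mul_eq_add_pow]
  · apply Finset.sum_congr rfl
    intro Z hZ
    rw [Finset.mem_powerset] at hZ
    have hd : Disjoint M Z :=
      Finset.disjoint_of_subset_right hZ Finset.disjoint_sdiff
    rw [Finset.card_union_of_disjoint hd, Finset.card_sdiff_of_subset h]
    congr 2 <;> omega
  · intro Z hZ W hW hZW
    simp only [Finset.coe_powerset, Set.mem_preimage, Set.mem_powerset_iff, Finset.coe_subset,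
      Finset.mem_coe, Finset.mem_powerset] at hZ hW
    have h1 : (M ∪ Z) \ M = Z := by
      rw [Finset.union_sdiff_left]
      exact Finset.sdiff_eq_self_of_disjoint
        (Finset.disjoint_of_subset_left hZ Finset.sdiff_disjoint)
    have h2 : (M ∪ W) \ M = W := by
      rw [Finset.union_sdiff_left]
      exact Finset.sdiff_eq_self_of_disjoint
        (Finset.disjoint_of_subset_left hW Finset.sdiff_disjoint)
    rw [← h1, ← h2]
    simp only at hZW
    rw [hZW]

lemma aux_thin {α : Type*} [DecidableEq α] (Y : Finset α) (A : Finset α → Prop)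
    (hmono : ∀ S T, S ⊆ T → A S → A T) (s : ℕ)
    (hw : ∀ H ⊆ Y, A H → ∃ M ⊆ H, A M ∧ M.card ≤ s)
    (p q : ℝ) (hp0 : 0 ≤ p) (hp1 : p ≤ 1) (hq0 : 0 ≤ q) (hq1 : q ≤ 1) :
    q ^ s * ∑ H ∈ Y.powerset, (if A H then p ^ H.card * (1 - p) ^ (Y.card - H.card) else 0) ≤
      ∑ H ∈ Y.powerset,
        (if A H then (p * q) ^ H.card * (1 - p * q) ^ (Y.card - H.card) else 0) := by
  have key : ∀ H' ∈ Y.powerset, 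
      (if A H' then (p * q) ^ H'.card * (1 - p * q) ^ (Y.card - H'.card) else 0)
      = ∑ H ∈ Finset.Icc H' Y, (if A H' then p ^ H.card * (1 - p) ^ (Y.card - H.card) *
          (q ^ H'.card * (1 - q) ^ (H.card - H'.card)) else 0) := by
    intro H' hH'
    rw [Finset.mem_powerset] at hH'
    split_ifs
    · have := aux_sum_Icc H' Y hH' (p * (1 - q)) (1 - p)
      rw [show p * (1 - q) + (1 - p) = 1 - p * q by ring] at this
      rw [← this, Finset.mul_sum]
      apply Finset.sum_congr rfl
      intro H hH
      rw [Finset.mem_Icc] at hH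
      have hc : H'.card ≤ H.card := Finset.card_le_card hH.1
      obtain ⟨d, hd⟩ := Nat.exists_eq_add_of_le hc
      rw [hd, Nat.add_sub_cancel_left, pow_add, mul_pow, mul_pow]
      ring
    · simp
  rw [Finset.sum_congr rfl key]
  rw [Finset.sum_comm' (s' := fun H => H.powerset) (t' := Y.powerset)]
  · rw [Finset.mul_sum]
    apply Finset.sum_le_sum
    intro H hH
    rw [Finset.mem_powerset] at hH
    have hnn : ∀ H' : Finset α, 0 ≤ (if A H' then p ^ H.card * (1 - p) ^ (Y.card - H.card) *
          (q ^ H'.card * (1 - q) ^ (H.card - H'.card)) else 0) := by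
      intro H'
      have h1 : 0 ≤ 1 - p := by linarith
      have h2 : 0 ≤ 1 - q := by linarith
      split_ifs <;> positivity
    split_ifs with hA
    · obtain ⟨M, hMH, hAM, hMs⟩ := hw H hH hA
      calc q ^ s * (p ^ H.card * (1 - p) ^ (Y.card - H.card))
          ≤ q ^ M.card * (p ^ H.card * (1 - p) ^ (Y.card - H.card)) := by
            apply mul_le_mul_of_nonneg_right (pow_le_pow_of_le_one hq0 hq1 hMs)
            have h1 : 0 ≤ 1 - p := by linarith
            positivity
        _ = ∑ H' ∈ Finset.Icc M H, (if A H' then p ^ H.card * (1 - p) ^ (Y.card - H.card) *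
          (q ^ H'.card * (1 - q) ^ (H.card - H'.card)) else 0) := by
            have := aux_sum_Icc M H hMH q (1 - q)
            rw [show q + (1 - q) = 1 by ring, one_pow] at this
            have e : q ^ M.card = q ^ M.card *
                ∑ H' ∈ Finset.Icc M H, q ^ (H'.card - M.card) * (1 - q) ^ (H.card - H'.card) := by
              rw [this, mul_one]
            rw [e, Finset.mul_sum, Finset.sum_mul]
            apply Finset.sum_congr rfl
            intro H' hH'
            rw [Finset.mem_Icc] at hH'
            rw [if_pos (hmono M H' hH'.1 hAM)]
            have hc : M.card ≤ H'.card := Finset.card_le_card hH'.1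
            obtain ⟨d, hd⟩ := Nat.exists_eq_add_of_le hc
            rw [hd, Nat.add_sub_cancel_left, pow_add]
            ring
        _ ≤ _ := by
            apply Finset.sum_le_sum_of_subset_of_nonneg
            · intro H' hH'
              rw [Finset.mem_Icc] at hH'
              exact Finset.mem_powerset.2 hH'.2
            · intro H' _ _
              exact hnn H'
    · rw [mul_zero]
      exact Finset.sum_nonneg fun H' _ => hnn H'
  · intro H' H
    simp only [Finset.mem_powerset, Finset.mem_Icc]
    constructor
    · rintro ⟨_, h2, h3⟩
      exact ⟨h2, h3⟩
    · rintro ⟨h2, h3⟩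
      exact ⟨h2.trans h3, h2, h3⟩

lemma aux_mean {α : Type*} [DecidableEq α] (X : Finset α) (p : ℝ) :
    ∑ H ∈ X.powerset, (H.card : ℝ) * (p ^ H.card * (1 - p) ^ (X.card - H.card)) = X.card * p := by
  have h1 : ∀ H ∈ X.powerset, (H.card : ℝ) * (p ^ H.card * (1 - p) ^ (X.card - H.card))
      = ∑ e ∈ X, (if e ∈ H then p ^ H.card * (1 - p) ^ (X.card - H.card) else 0) := by
    intro H hH
    rw [Finset.mem_powerset] at hH
    rw [← Finset.sum_filter, Finset.sum_const, nsmul_eq_mul,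
      Finset.filter_mem_eq_inter, Finset.inter_eq_right.2 hH]
  rw [Finset.sum_congr rfl h1, Finset.sum_comm]
  rw [Finset.sum_congr rfl (g := fun _ => p), Finset.sum_const, nsmul_eq_mul]
  intro e he
  have := aux_sum_Icc {e} X (Finset.singleton_subset_iff.2 he) p (1 - p)
  rw [show p + (1 - p) = 1 by ring, one_pow] at this
  have e1 : p = p * ∑ H ∈ Finset.Icc {e} X,
      p ^ (H.card - ({e} : Finset α).card) * (1 - p) ^ (X.card - H.card) := by
    rw [this, mul_one]
  refine Eq.trans ?_ e1.symm
  rw [← Finset.sum_filter, Finset.mul_sum]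
  have e2 : X.powerset.filter (fun H => e ∈ H) = Finset.Icc {e} X := by
    ext H
    simp only [Finset.mem_filter, Finset.mem_powerset, Finset.mem_Icc, Finset.le_eq_subset,
      Finset.singleton_subset_iff]
    tauto
  rw [e2]
  apply Finset.sum_congr rfl
  intro H h1
  rw [Finset.mem_Icc] at h1
  have : 1 ≤ H.card := Finset.card_pos.2 ⟨e, Finset.singleton_subset_iff.1 h1.1⟩
  obtain ⟨d, hd⟩ := Nat.exists_eq_add_of_le this
  rw [hd, Finset.card_singleton, Nat.add_sub_cancel_left, pow_add]
  ring

lemma aux_total {α : Type*} [DecidableEq α] (X : Finset α) (p : ℝ) :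
    ∑ H ∈ X.powerset, (p ^ H.card * (1 - p) ^ (X.card - H.card)) = 1 := by
  rw [Finset.sum_pow_mul_eq_add_pow]
  simp

/-- number of supersets -/
lemma aux_sup_card {n : ℕ} (S : Finset (Fin n)) (r : ℕ) (h : S.card ≤ r) :
    ((Finset.powersetCard r (Finset.univ : Finset (Fin n))).filter (fun R => S ⊆ R)).card
      = (n - S.card).choose (r - S.card) := by
  have := Finset.card_filter_powersetCard_subset S Finset.univ r (Finset.subset_univ _) h
  rw [Finset.card_univ, Fintype.card_fin] at this
  convert this
lemma JConn_mono {n j : ℕ} {H H' : Finset (Finset (Fin n))} (h : H ⊆ H') {J1 J2 : Finset (Fin n)}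
    (hc : JConn j H J1 J2) : JConn j H' J1 J2 := by
  obtain ⟨e1, h1, e2, h2, h3, h4, h5⟩ := hc
  refine ⟨e1, h h1, e2, h h2, h3, h4, ?_⟩
  exact Relation.ReflTransGen.mono (fun a b hab => ⟨h hab.1, h hab.2.1, hab.2.2⟩) _ _ h5

lemma JConn_symm {n j : ℕ} {H : Finset (Finset (Fin n))} {J1 J2 : Finset (Fin n)}
    (hc : JConn j H J1 J2) : JConn j H J2 J1 := by
  obtain ⟨e1, h1, e2, h2, h3, h4, h5⟩ := hc
  refine ⟨e2, h2, e1, h1, h4, h3, ?_⟩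
  have := Relation.reflTransGen_swap.2 h5
  refine Relation.ReflTransGen.mono (fun a b hab => ?_) _ _ this
  obtain ⟨ha, hb, hc⟩ := hab
  exact ⟨hb, ha, by rwa [Finset.inter_comm]⟩

lemma JConn_trans {n j : ℕ} {H : Finset (Finset (Fin n))} {J1 J2 J3 : Finset (Fin n)}
    (hJ : J2.card = j) (hc : JConn j H J1 J2) (hc' : JConn j H J2 J3) : JConn j H J1 J3 := by
  obtain ⟨e1, h1, e2, h2, h3, h4, h5⟩ := hc
  obtain ⟨f1, g1, f2, g2, g3, g4, g5⟩ := hc'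
  refine ⟨e1, h1, f2, g2, h3, g4, ?_⟩
  refine (h5.tail ⟨h2, g1, ?_⟩).trans g5
  rw [← hJ]
  exact Finset.card_le_card (Finset.subset_inter h4 g3)

lemma JConn_of_edge {n j : ℕ} {H : Finset (Finset (Fin n))} {J1 J2 e : Finset (Fin n)}
    (he : e ∈ H) (h1 : J1 ⊆ e) (h2 : J2 ⊆ e) : JConn j H J1 J2 :=
  ⟨e, he, e, he, h1, h2, Relation.ReflTransGen.refl⟩

lemma JConn_closed {n j : ℕ} {H D : Finset (Finset (Fin n))}
    (hD : ∀ e ∈ H, (∃ J ∈ D, J ⊆ e) → ∀ J : Finset (Fin n), J.card = j → J ⊆ e → J ∈ D)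
    {J1 J2 : Finset (Fin n)} (h1 : J1 ∈ D) (hJ2 : J2.card = j) (hc : JConn j H J1 J2) : J2 ∈ D := by
  obtain ⟨e1, he1, e2, he2, h3, h4, h5⟩ := hc
  have : ∃ J ∈ D, J ⊆ e2 := by
    clear h4 he2
    induction h5 with
    | refl => exact ⟨J1, h1, h3⟩
    | tail _ hbc ih =>
      obtain ⟨hb, hcc, hcard⟩ := hbc
      obtain ⟨J, hJs, hJc⟩ := Finset.exists_subset_card_eq hcard
      refine ⟨J, hD _ hb ih J hJc (hJs.trans Finset.inter_subset_left),
        hJs.trans Finset.inter_subset_right⟩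
  exact hD e2 he2 this J2 hJ2 h4

/-- `k`-sets containing both a member of `C` and a `j`-set outside `C`. -/
def mixK {n : ℕ} (k j : ℕ) (C : Finset (Finset (Fin n))) : Finset (Finset (Fin n)) :=
  (kSets n k).filter
    (fun K => (∃ J ∈ C, J ⊆ K) ∧ ∃ J : Finset (Fin n), J.card = j ∧ J ⊆ K ∧ J ∉ C)

lemma closed_of_sub {n k j : ℕ} {H C : Finset (Finset (Fin n))} (h : H ⊆ kSets n k \ mixK k j C) :
    ∀ e ∈ H, (∃ J ∈ C, J ⊆ e) → ∀ J : Finset (Fin n), J.card = j → J ⊆ e → J ∈ C := by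
  intro e he hJ J hc hs
  have := h he
  rw [Finset.mem_sdiff, mixK, Finset.mem_filter] at this
  by_contra hcon
  exact this.2 ⟨this.1, hJ, J, hc, hs, hcon⟩

lemma comp_iff {n k j : ℕ} {H C : Finset (Finset (Fin n))} (hH : H ⊆ kSets n k) :
    IsJComponent n j H C ↔ (C.Nonempty ∧ ∀ J ∈ C, J.card = j) ∧ H ⊆ kSets n k \ mixK k j C ∧
      ∀ J1 ∈ C, ∀ J2 ∈ C, JConn j H J1 J2 := by
  constructor
  · rintro ⟨h1, h2, h3, h4⟩
    refine ⟨⟨h1, h2⟩, ?_, h3⟩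
    intro e he
    rw [Finset.mem_sdiff]
    refine ⟨hH he, fun hm => ?_⟩
    rw [mixK, Finset.mem_filter] at hm
    obtain ⟨_, ⟨J, hJC, hJe⟩, J', hJ', hJe', hn⟩ := hm
    exact hn (h4 J' hJ' ⟨J, hJC, JConn_of_edge he hJe' hJe⟩)
  · rintro ⟨⟨h1, h2⟩, h3, h4⟩
    refine ⟨h1, h2, h4, ?_⟩
    rintro J hJ ⟨J', hJ', hc⟩
    exact JConn_closed (closed_of_sub h3) hJ' hJ (JConn_symm hc)

lemma comp_eq {n j : ℕ} {H C1 C2 : Finset (Finset (Fin n))} (h1 : IsJComponent n j H C1)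
    (h2 : IsJComponent n j H C2) {J : Finset (Fin n)} (hJ1 : J ∈ C1) (hJ2 : J ∈ C2) : C1 = C2 := by
  apply Finset.Subset.antisymm
  · intro J' hJ'
    exact h2.2.2.2 J' (h1.2.1 J' hJ') ⟨J, hJ2, h1.2.2.1 J' hJ' J hJ1⟩
  · intro J' hJ'
    exact h1.2.2.2 J' (h2.2.1 J' hJ') ⟨J, hJ1, h2.2.2.1 J' hJ' J hJ2⟩

lemma witness {n k j : ℕ} {H C : Finset (Finset (Fin n))} (hne : C.Nonempty)
    (hC : ∀ J ∈ C, J.card = j)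
    (hH : H ⊆ kSets n k \ mixK k j C) (hA : ∀ J1 ∈ C, ∀ J2 ∈ C, JConn j H J1 J2) :
    ∃ M ⊆ H, (∀ J1 ∈ C, ∀ J2 ∈ C, JConn j M J1 J2) ∧ M.card ≤ C.card := by
  let P : Finset (Finset (Fin n)) → Prop := fun D => D.Nonempty ∧
    ∃ M ⊆ H, (∀ J1 ∈ D, ∀ J2 ∈ D, JConn j M J1 J2) ∧ M.card ≤ D.card
  have hcl := closed_of_sub hH
  obtain ⟨J0, hJ0⟩ := hne
  obtain ⟨e0, he0, -, -, hJe0, -⟩ := hA J0 hJ0 J0 hJ0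
  have hP0 : {J0} ∈ C.powerset.filter P := by
    rw [Finset.mem_filter]
    refine ⟨by simpa using hJ0, by simp, {e0}, by simpa using he0, ?_, by simp⟩
    intro J1 h1 J2 h2
    rw [Finset.mem_singleton] at h1 h2
    subst h1 h2
    exact JConn_of_edge (Finset.mem_singleton_self _) hJe0 hJe0
  obtain ⟨D, hD, hmax⟩ := Finset.exists_max_image (C.powerset.filter P) Finset.card ⟨_, hP0⟩
  rw [Finset.mem_filter, Finset.mem_powerset] at hD
  obtain ⟨hDC, hDne, M, hMH, hMc, hMcard⟩ := hD
  have hDcl : ∀ e ∈ H, (∃ J ∈ D, J ⊆ e) → ∀ J : Finset (Fin n), J.card = j → J ⊆ e → J ∈ D := by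
    rintro e he ⟨J, hJD, hJe⟩ J' hJ' hJe'
    by_contra hcon
    have hJ'C : J' ∈ C := hcl e he ⟨J, hDC hJD, hJe⟩ J' hJ' hJe'
    have hmem : insert J' D ∈ C.powerset.filter P := by
      rw [Finset.mem_filter, Finset.mem_powerset]
      refine ⟨Finset.insert_subset hJ'C hDC, Finset.insert_nonempty _ _, insert e M,
        Finset.insert_subset he hMH, ?_, ?_⟩
      · have hold : ∀ J1 ∈ D, ∀ J2 ∈ D, JConn j (insert e M) J1 J2 := fun J1 h1 J2 h2 =>
          JConn_mono (Finset.subset_insert _ _) (hMc J1 h1 J2 h2)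
        have hnew : ∀ J1 ∈ D, JConn j (insert e M) J1 J' := fun J1 h1 =>
          JConn_trans (hC J (hDC hJD)) (hold J1 h1 J hJD)
            (JConn_of_edge (Finset.mem_insert_self _ _) hJe hJe')
        intro J1 h1 J2 h2
        rw [Finset.mem_insert] at h1 h2
        rcases h1 with rfl | h1 <;> rcases h2 with rfl | h2
        · exact JConn_of_edge (Finset.mem_insert_self _ _) hJe' hJe'
        · exact JConn_symm (hnew _ h2)
        · exact hnew _ h1
        · exact hold _ h1 _ h2
      · rw [Finset.card_insert_of_notMem hcon]
        exact (Finset.card_insert_le _ _).trans (by omega)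
    have := hmax _ hmem
    rw [Finset.card_insert_of_notMem hcon] at this
    omega
  obtain ⟨J1, hJ1⟩ := hDne
  have hCD : C ⊆ D := fun J hJ =>
    JConn_closed hDcl hJ1 (hC J hJ) (hA J1 (hDC hJ1) J hJ)
  have : C = D := Finset.Subset.antisymm hCD hDC
  subst this
  exact ⟨M, hMH, hMc, hMcard⟩

lemma le_choose_aux : ∀ k j : ℕ, 1 ≤ j → j + 1 ≤ k → k ≤ k.choose j
  | 0, _, _, h => by omega
  | k + 1, 0, h, _ => by omega
  | k + 1, j + 1, _, h => by
    rw [Nat.choose_succ_succ]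
    rcases Nat.eq_zero_or_pos j with rfl | hj
    · simp
    · have h1 := le_choose_aux k j hj (by omega)
      have h2 : 0 < k.choose (j + 1) := Nat.choose_pos (by omega)
      rw [Nat.succ_eq_add_one]
      omega

lemma comp_card_ge {n k j : ℕ} (hk : 3 ≤ k) (hj : 1 ≤ j) (hjk : j + 1 ≤ k)
    {H C : Finset (Finset (Fin n))} (hH : H ⊆ kSets n k) (h : IsJComponent n j H C) :
    3 ≤ C.card := by
  obtain ⟨⟨J, hJ⟩, h2, h3, h4⟩ := h
  obtain ⟨e, he, -, -, hJe, -⟩ := h3 J hJ J hJ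
  have hec : e.card = k := by
    have := hH he
    rw [kSets, Finset.mem_powersetCard] at this
    exact this.2
  have hsub : Finset.powersetCard j e ⊆ C := by
    intro J' hJ'
    rw [Finset.mem_powersetCard] at hJ'
    exact h4 J' hJ'.2 ⟨J, hJ, JConn_of_edge he hJ'.1 hJe⟩
  have := Finset.card_le_card hsub
  rw [Finset.card_powersetCard, hec] at this
  have := le_choose_aux k j hj hjk
  omega

lemma comp_count {n j : ℕ} (H : Finset (Finset (Fin n))) :
    ((Finset.univ : Finset (Finset (Finset (Fin n)))).filter
      (fun C => IsJComponent n j H C)).card ≤ H.card := by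
  have hex : ∀ C : Finset (Finset (Fin n)), IsJComponent n j H C →
      ∃ e ∈ H, ∃ J ∈ C, J ⊆ e := by
    rintro C ⟨⟨J, hJ⟩, h2, h3, h4⟩
    obtain ⟨e, he, -, -, hJe, -⟩ := h3 J hJ J hJ
    exact ⟨e, he, J, hJ, hJe⟩
  refine Finset.card_le_card_of_injOn
    (fun C => if h : IsJComponent n j H C then (hex C h).choose else ∅) ?_ ?_
  · intro C hC
    have hC' : IsJComponent n j H C := by simpa using hC
    simp only [hC', dif_pos]
    exact (hex C hC').choose_spec.1
  · intro C1 hC1 C2 hC2 heq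
    have h1 : IsJComponent n j H C1 := by simpa using hC1
    have h2 : IsJComponent n j H C2 := by simpa using hC2
    simp only [h1, h2, dif_pos] at heq
    obtain ⟨he1, J1, hJ1, hs1⟩ := (hex C1 h1).choose_spec
    obtain ⟨he2, J2, hJ2, hs2⟩ := (hex C2 h2).choose_spec
    rw [← heq] at hs2
    have : J2 ∈ C1 := h1.2.2.2 J2 (h2.2.1 J2 hJ2) ⟨J1, hJ1, JConn_of_edge he1 hs2 hs1⟩
    exact comp_eq h1 h2 this hJ2

/-- Every set containing both kinds of `j`-sets contains a mixed `k`-set. -/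
lemma exists_mixK {n k j : ℕ} (hjk : j + 1 ≤ k) {C : Finset (Finset (Fin n))}
    (hC : ∀ J ∈ C, J.card = j) (R : Finset (Fin n)) (hR : k ≤ R.card) (J' : Finset (Fin n))
    (hJ' : J'.card = j) (hJ'R : J' ⊆ R) (hJ'C : J' ∉ C) :
    ∀ d : ℕ, ∀ J ∈ C, J ⊆ R → (J' \ J).card = d → ∃ K ∈ mixK k j C, K ⊆ R := by
  intro d
  induction d with
  | zero =>
    intro J hJ hJR hd
    exfalso
    rw [Finset.card_eq_zero, Finset.sdiff_eq_empty_iff_subset] at hd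
    have := Finset.eq_of_subset_of_card_le hd (by rw [hC J hJ, hJ'])
    exact hJ'C (this ▸ hJ)
  | succ d ih =>
    intro J hJ hJR hd
    have hcJ := hC J hJ
    obtain ⟨x, hx⟩ : (J' \ J).Nonempty := Finset.card_pos.1 (by omega)
    have hsw : (J \ J').card = (J' \ J).card := by
      have h1 := Finset.card_sdiff_add_card_inter J J'
      have h2 := Finset.card_sdiff_add_card_inter J' J
      rw [Finset.inter_comm] at h2
      omega
    obtain ⟨y, hy⟩ : (J \ J').Nonempty := Finset.card_pos.1 (by omega)
    rw [Finset.mem_sdiff] at hx hy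
    have hsubR : insert x J ⊆ R := Finset.insert_subset (hJ'R hx.1) hJR
    have hcins : (insert x J).card = j + 1 := by rw [Finset.card_insert_of_notMem hx.2, hcJ]
    obtain ⟨K, hK1, hK2, hK3⟩ := Finset.exists_subsuperset_card_eq hsubR (by omega) hR
    let J2 := (insert x J).erase y
    have hyx : y ∈ insert x J := Finset.mem_insert_of_mem hy.1
    have hJ2c : J2.card = j := by
      rw [Finset.card_erase_of_mem hyx, hcins]; rfl
    have hJ2s : J2 ⊆ insert x J := Finset.erase_subset _ _
    by_cases hJ2C : J2 ∈ C
    · apply ih J2 hJ2C (hJ2s.trans hsubR)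
      have : J' \ J2 = (J' \ J).erase x := by
        ext z
        simp only [J2, Finset.mem_sdiff, Finset.mem_erase, Finset.mem_insert]
        constructor
        · rintro ⟨h1, h2⟩
          refine ⟨?_, h1, ?_⟩
          · rintro rfl
            apply h2
            refine ⟨?_, Or.inl rfl⟩
            rintro rfl
            exact hy.2 h1
          · intro hz
            apply h2
            refine ⟨?_, Or.inr hz⟩
            rintro rfl
            exact hy.2 h1
        · rintro ⟨h1, h2, h3⟩
          refine ⟨h2, ?_⟩
          rintro ⟨_, h4 | h4⟩
          · exact h1 h4
          · exact h3 h4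
      rw [this, Finset.card_erase_of_mem (Finset.mem_sdiff.2 hx), hd]
      rfl
    · refine ⟨K, ?_, hK2⟩
      rw [mixK, Finset.mem_filter]
      refine ⟨?_, ⟨J, hJ, (Finset.subset_insert _ _).trans hK1⟩, J2, hJ2c, hJ2s.trans hK1, hJ2C⟩
      rw [kSets, Finset.mem_powersetCard]
      exact ⟨Finset.subset_univ _, hK3⟩

lemma choose_shift (a b t : ℕ) : a.choose b ≤ (a + t).choose (b + t) := by
  induction t with
  | zero => simp
  | succ t ih =>
    rw [← Nat.add_assoc, ← Nat.add_assoc, Nat.choose_succ_succ]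
    omega

lemma iso {n k j : ℕ} (hjk : j + 1 ≤ k) (hn : 2 * k ≤ n) {C : Finset (Finset (Fin n))}
    (hC : ∀ J ∈ C, J.card = j) :
    C.card * (n.choose j - C.card) * (n - 2 * j).choose (2 * k - 2 * j)
      ≤ (mixK k j C).card * (n - k).choose k * ((2 * k).choose j * (2 * k).choose j) := by
  let N := Finset.powersetCard j (Finset.univ : Finset (Fin n))
  let RR := (Finset.powersetCard (2 * k) (Finset.univ : Finset (Fin n))).filter
    (fun R => (∃ J ∈ C, J ⊆ R) ∧ ∃ J : Finset (Fin n), J.card = j ∧ J ⊆ R ∧ J ∉ C)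
  have hCN : C ⊆ N := by
    intro J hJ
    simp only [N, Finset.mem_powersetCard]
    exact ⟨Finset.subset_univ _, hC J hJ⟩
  have hNC : (N \ C).card = n.choose j - C.card := by
    rw [Finset.card_sdiff_of_subset hCN, Finset.card_powersetCard, Finset.card_univ,
      Fintype.card_fin]
  have h1 : (C ×ˢ (N \ C)).card * (n - 2 * j).choose (2 * k - 2 * j) ≤
      RR.card * ((2 * k).choose j * (2 * k).choose j) := by
    apply Finset.card_mul_le_card_mul (fun (a : Finset (Fin n) × Finset (Fin n)) R => a.1 ∪ a.2 ⊆ R)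
    · rintro ⟨J, J'⟩ hJ
      rw [Finset.mem_product, Finset.mem_sdiff, Finset.mem_powersetCard] at hJ
      obtain ⟨hJC, ⟨-, hJ'⟩, hJ'C⟩ := hJ
      simp only at hJC hJ' hJ'C
      have hcard : (J ∪ J').card ≤ 2 * j := by
        have := Finset.card_union_le J J'
        rw [hC J hJC, hJ'] at this
        omega
      have h2 := aux_sup_card (J ∪ J') (2 * k) (by omega)
      have h3 : (n - 2 * j).choose (2 * k - 2 * j) ≤
          (n - (J ∪ J').card).choose (2 * k - (J ∪ J').card) := by
        have := choose_shift (n - 2 * j) (2 * k - 2 * j) (2 * j - (J ∪ J').card)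
        convert this using 2 <;> omega
      refine h3.trans (h2 ▸ ?_)
      apply Finset.card_le_card
      intro R hR
      rw [Finset.mem_filter] at hR
      rw [Finset.mem_bipartiteAbove, Finset.mem_filter]
      exact ⟨⟨hR.1, ⟨J, hJC, Finset.subset_union_left.trans hR.2⟩, J', hJ',
        Finset.subset_union_right.trans hR.2, hJ'C⟩, hR.2⟩
    · intro R hR
      rw [Finset.mem_filter, Finset.mem_powersetCard] at hR
      have : Finset.card (Finset.powersetCard j R ×ˢ Finset.powersetCard j R)
          = (2 * k).choose j * (2 * k).choose j := by
        rw [Finset.card_product, Finset.card_powersetCard, hR.1.2]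
      rw [← this]
      apply Finset.card_le_card
      rintro ⟨J, J'⟩ hJ
      rw [Finset.mem_bipartiteBelow, Finset.mem_product, Finset.mem_sdiff,
        Finset.mem_powersetCard] at hJ
      obtain ⟨⟨hJC, ⟨-, hJ'⟩, -⟩, hsub⟩ := hJ
      rw [Finset.mem_product, Finset.mem_powersetCard, Finset.mem_powersetCard]
      exact ⟨⟨Finset.subset_union_left.trans hsub, hC J hJC⟩,
        Finset.subset_union_right.trans hsub, hJ'⟩
  have h2 : RR.card * 1 ≤ (mixK k j C).card * (n - k).choose k := by
    apply Finset.card_mul_le_card_mul (fun R K => K ⊆ R)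
    · intro R hR
      rw [Finset.mem_filter, Finset.mem_powersetCard] at hR
      obtain ⟨⟨-, hRc⟩, ⟨J, hJC, hJR⟩, J', hJ', hJ'R, hJ'C⟩ := hR
      obtain ⟨K, hK, hKR⟩ := exists_mixK hjk hC R (by omega) J' hJ' hJ'R hJ'C _ J hJC hJR rfl
      rw [Nat.one_le_iff_ne_zero, ← Nat.pos_iff_ne_zero, Finset.card_pos]
      exact ⟨K, (Finset.mem_bipartiteAbove _).2 ⟨hK, hKR⟩⟩
    · intro K hK
      rw [mixK, Finset.mem_filter, kSets, Finset.mem_powersetCard] at hK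
      have h3 := aux_sup_card K (2 * k) (by omega)
      rw [hK.1.2, show 2 * k - k = k by omega] at h3
      rw [← h3]
      apply Finset.card_le_card
      intro R hR
      rw [Finset.mem_bipartiteBelow] at hR
      rw [Finset.mem_filter]
      exact ⟨(Finset.mem_filter.1 hR.1).1, hR.2⟩
  rw [Finset.card_product, hNC] at h1
  rw [mul_one] at h2
  exact h1.trans (Nat.mul_le_mul_right _ h2)

lemma mix_small {n k j : ℕ} (hj : 1 ≤ j) (hjk : j + 1 ≤ k) {C : Finset (Finset (Fin n))}
    (hC : ∀ J ∈ C, J.card = j) :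
    C.card * (n - C.card * j).choose (k - j) ≤ (mixK k j C).card := by
  let U := C.biUnion id
  have hU : U.card ≤ C.card * j := by
    refine Finset.card_biUnion_le_card_mul _ _ _ ?_
    intro J hJ
    exact (hC J hJ).le
  have h1 : (C ×ˢ Finset.powersetCard (k - j) Uᶜ).card ≤ (mixK k j C).card := by
    have hJU : ∀ J ∈ C, J ⊆ U := fun J hJ => Finset.subset_biUnion_of_mem id hJ
    have hinter : ∀ J ∈ C, ∀ T ⊆ Uᶜ, (J ∪ T) ∩ U = J := by
      intro J hJ T hT
      rw [Finset.union_inter_distrib_right, Finset.inter_eq_left.2 (hJU J hJ),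
        Finset.disjoint_iff_inter_eq_empty.1
          (Finset.disjoint_of_subset_left hT disjoint_compl_left), Finset.union_empty]
    have hint2 : ∀ J ∈ C, ∀ T ⊆ Uᶜ, (J ∪ T) ∩ Uᶜ = T := by
      intro J hJ T hT
      rw [Finset.union_inter_distrib_right, Finset.inter_eq_left.2 hT,
        Finset.disjoint_iff_inter_eq_empty.1
          (Finset.disjoint_of_subset_left (hJU J hJ) disjoint_compl_right), Finset.empty_union]
    refine Finset.card_le_card_of_injOn (fun a => a.1 ∪ a.2) ?_ ?_
    · rintro ⟨J, T⟩ h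
      have h := Finset.mem_coe.1 h
      rw [Finset.mem_product, Finset.mem_powersetCard] at h
      obtain ⟨hJ, hT, hTc⟩ := h
      simp only at hJ hT hTc
      simp only [Finset.mem_coe]
      rw [mixK, Finset.mem_filter, kSets, Finset.mem_powersetCard]
      have hdis : Disjoint J T := Finset.disjoint_of_subset_left (hJU J hJ)
        (Finset.disjoint_of_subset_right hT disjoint_compl_right)
      have hcard : (J ∪ T).card = k := by
        rw [Finset.card_union_of_disjoint hdis, hC J hJ, hTc]; omega
      refine ⟨⟨Finset.subset_univ _, hcard⟩, ⟨J, hJ, Finset.subset_union_left⟩, ?_⟩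
      obtain ⟨t, ht⟩ : T.Nonempty := Finset.card_pos.1 (by omega)
      obtain ⟨J', h1, h2, h3⟩ := Finset.exists_subsuperset_card_eq (s := {t}) (t := J ∪ T) (n := j)
        (by simp [ht]) (by simpa using hj) (by omega)
      refine ⟨J', h3, h2, fun hcon => ?_⟩
      have htU := hJU J' hcon (h1 (Finset.mem_singleton_self t))
      exact (Finset.mem_compl.1 (hT ht)) htU
    · rintro ⟨J, T⟩ h ⟨J', T'⟩ h' heq
      have h := Finset.mem_coe.1 h
      have h' := Finset.mem_coe.1 h'
      rw [Finset.mem_product, Finset.mem_powersetCard] at h h'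
      simp only at heq h h'
      have e1 := hinter J h.1 T h.2.1
      have e2 := hint2 J h.1 T h.2.1
      rw [heq, hinter J' h'.1 T' h'.2.1] at e1
      rw [heq, hint2 J' h'.1 T' h'.2.1] at e2
      rw [e1, e2]
  rw [Finset.card_product, Finset.card_powersetCard, Finset.card_compl, Fintype.card_fin] at h1
  refine le_trans ?_ h1
  apply Nat.mul_le_mul_left
  exact Nat.choose_le_choose _ (by omega)

/-- The probability that `C` is a component. -/
def compProb (n k j : ℕ) (p : ℝ) (C : Finset (Finset (Fin n))) : ℝ :=
  binomProb n k p (fun H => IsJComponent n j H C)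

lemma compProb_eq {n k j : ℕ} (p : ℝ) {C : Finset (Finset (Fin n))} (hne : C.Nonempty)
    (hC : ∀ J ∈ C, J.card = j) :
    compProb n k j p C = (1 - p) ^ (mixK k j C).card *
      ∑ H ∈ (kSets n k \ mixK k j C).powerset,
        (if (∀ J1 ∈ C, ∀ J2 ∈ C, JConn j H J1 J2) then
          p ^ H.card * (1 - p) ^ ((kSets n k \ mixK k j C).card - H.card) else 0) := by
  have hmX : mixK k j C ⊆ kSets n k := Finset.filter_subset _ _
  rw [compProb, binomProb, Finset.mul_sum]
  have hsub : (kSets n k \ mixK k j C).powerset ⊆ (kSets n k).powerset :=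
    Finset.powerset_mono.2 Finset.sdiff_subset
  rw [← Finset.sum_subset hsub]
  · apply Finset.sum_congr rfl
    intro H hH
    rw [Finset.mem_powerset] at hH
    have hiff : IsJComponent n j H C ↔ ∀ J1 ∈ C, ∀ J2 ∈ C, JConn j H J1 J2 := by
      rw [comp_iff (hH.trans Finset.sdiff_subset)]
      exact ⟨fun h => h.2.2, fun h => ⟨⟨hne, hC⟩, hH, h⟩⟩
    have hle := Finset.card_le_card hH
    have hcs := Finset.card_sdiff_add_card_eq_card hmX
    by_cases h : IsJComponent n j H C
    · rw [if_pos h, if_pos (hiff.1 h)]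
      have : (kSets n k).card - H.card =
          (mixK k j C).card + ((kSets n k \ mixK k j C).card - H.card) := by omega
      rw [this, pow_add]
      ring
    · rw [if_neg h, if_neg (fun h' => h (hiff.2 h')), mul_zero]
  · intro H hH hH'
    rw [Finset.mem_powerset] at hH hH'
    rw [if_neg]
    intro h
    exact hH' ((comp_iff hH).1 h).2.1

lemma compProb_le {n k j : ℕ} (p q ε : ℝ) (hp0 : 0 ≤ p) (hp1 : p ≤ 1) (hq0 : 0 < q) (hq1 : q ≤ 1)
    (hpq : p * q < 1) {C : Finset (Finset (Fin n))} (hne : C.Nonempty)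
    (hC : ∀ J ∈ C, J.card = j)
    (hε : (1 - p) ^ (mixK k j C).card ≤
      ε * (q ^ C.card * (1 - p * q) ^ (mixK k j C).card)) :
    compProb n k j p C ≤ ε * compProb n k j (p * q) C := by
  have hth := aux_thin (kSets n k \ mixK k j C) (fun H => ∀ J1 ∈ C, ∀ J2 ∈ C, JConn j H J1 J2)
    (fun S T hST hS J1 h1 J2 h2 => JConn_mono hST (hS J1 h1 J2 h2)) C.card
    (fun H hH hA => witness hne hC hH hA) p q hp0 hp1 hq0.le hq1
  rw [compProb_eq p hne hC, compProb_eq (p * q) hne hC]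
  set S := ∑ H ∈ (kSets n k \ mixK k j C).powerset,
        (if (∀ J1 ∈ C, ∀ J2 ∈ C, JConn j H J1 J2) then
          p ^ H.card * (1 - p) ^ ((kSets n k \ mixK k j C).card - H.card) else 0) with hS
  set S' := ∑ H ∈ (kSets n k \ mixK k j C).powerset,
        (if (∀ J1 ∈ C, ∀ J2 ∈ C, JConn j H J1 J2) then
          (p * q) ^ H.card * (1 - p * q) ^ ((kSets n k \ mixK k j C).card - H.card) else 0) with hS'
  have hth' : q ^ C.card * S ≤ S' := by
    rw [hS, hS']
    convert hth
  have hS0 : 0 ≤ S := by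
    apply Finset.sum_nonneg
    intro H _
    have h1 : 0 ≤ 1 - p := by linarith
    split_ifs <;> positivity
  have h1 : 0 < 1 - p * q := by linarith
  have hε0 : 0 ≤ ε := by
    by_contra hneg
    have h2 : 0 < q ^ C.card * (1 - p * q) ^ (mixK k j C).card := by positivity
    have h3 : 0 ≤ (1 - p) ^ (mixK k j C).card := pow_nonneg (by linarith) _
    nlinarith
  calc (1 - p) ^ (mixK k j C).card * S
      ≤ ε * (q ^ C.card * (1 - p * q) ^ (mixK k j C).card) * S :=
        mul_le_mul_of_nonneg_right hε hS0
    _ = ε * ((1 - p * q) ^ (mixK k j C).card * (q ^ C.card * S)) := by ring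
    _ ≤ ε * ((1 - p * q) ^ (mixK k j C).card * S') := by
        apply mul_le_mul_of_nonneg_left _ hε0
        exact mul_le_mul_of_nonneg_left hth' (by positivity)

lemma sum_compProb_le {n k j : ℕ} (p : ℝ) (hp0 : 0 ≤ p) (hp1 : p ≤ 1) :
    ∑ C : Finset (Finset (Fin n)), compProb n k j p C ≤ n.choose k * p := by
  have hcard : (kSets n k).card = n.choose k := by
    rw [kSets, Finset.card_powersetCard, Finset.card_univ, Fintype.card_fin]
  have hm := aux_mean (kSets n k) p
  rw [hcard] at hm
  rw [← hm]
  simp only [compProb, binomProb]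
  rw [Finset.sum_comm]
  apply Finset.sum_le_sum
  intro H _
  rw [← Finset.sum_filter, Finset.sum_const, nsmul_eq_mul, hcard]
  apply mul_le_mul_of_nonneg_right
  · exact_mod_cast comp_count H
  · have h1 : 0 ≤ 1 - p := by linarith
    positivity

lemma compProb_nonneg {n k j : ℕ} (p : ℝ) (hp0 : 0 ≤ p) (hp1 : p ≤ 1)
    (C : Finset (Finset (Fin n))) : 0 ≤ compProb n k j p C := by
  rw [compProb, binomProb]
  apply Finset.sum_nonneg
  intro H _
  have h1 : 0 ≤ 1 - p := by linarith
  split_ifs <;> positivity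

lemma finite_main {n k j : ℕ} (hk : 3 ≤ k) (hj : 1 ≤ j) (hjk : j + 1 ≤ k) (p q ε : ℝ)
    (hp0 : 0 ≤ p) (hp1 : p ≤ 1) (hq0 : 0 < q) (hq1 : q ≤ 1) (hpq : p * q < 1) (hε0 : 0 ≤ ε)
    (hε : ∀ C : Finset (Finset (Fin n)), (∀ J ∈ C, J.card = j) → 3 ≤ C.card →
      2 * C.card ≤ n.choose j → (1 - p) ^ (mixK k j C).card ≤
      ε * (q ^ C.card * (1 - p * q) ^ (mixK k j C).card)) :
    1 - ε * (n.choose k * (p * q)) ≤ binomProb n k p (fun H =>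
          ∀ C1 C2 : Finset (Finset (Fin n)),
            IsJComponent n j H C1 → IsJComponent n j H C2 →
            2 ≤ C1.card → 2 ≤ C2.card → C1 = C2) := by
  have hpq0 : 0 ≤ p * q := mul_nonneg hp0 hq0.le
  have hb : ∀ C : Finset (Finset (Fin n)), 2 * C.card ≤ n.choose j →
      compProb n k j p C ≤ ε * compProb n k j (p * q) C := by
    intro C hCs
    by_cases hC : (∀ J ∈ C, J.card = j) ∧ 3 ≤ C.card
    · exact compProb_le p q ε hp0 hp1 hq0 hq1 hpq (Finset.card_pos.1 (by omega)) hC.1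
        (hε C hC.1 hC.2 hCs)
    · have : compProb n k j p C = 0 := by
        rw [compProb, binomProb]
        apply Finset.sum_eq_zero
        intro H hH
        rw [Finset.mem_powerset] at hH
        rw [if_neg]
        intro h
        exact hC ⟨h.2.1, comp_card_ge hk hj hjk hH h⟩
      rw [this]
      exact mul_nonneg hε0 (compProb_nonneg _ hpq0 hpq.le _)
  have hsum : ∑ C ∈ (Finset.univ : Finset (Finset (Finset (Fin n)))).filter
      (fun C => 2 * C.card ≤ n.choose j), compProb n k j p C ≤ ε * (n.choose k * (p * q)) := by
    calc _ ≤ ∑ C ∈ (Finset.univ : Finset (Finset (Finset (Fin n)))).filter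
            (fun C => 2 * C.card ≤ n.choose j), ε * compProb n k j (p * q) C := by
          apply Finset.sum_le_sum
          intro C hC
          exact hb C (Finset.mem_filter.1 hC).2
      _ ≤ ∑ C : Finset (Finset (Fin n)), ε * compProb n k j (p * q) C := by
          apply Finset.sum_le_sum_of_subset_of_nonneg (Finset.filter_subset _ _)
          intro C _ _
          exact mul_nonneg hε0 (compProb_nonneg _ hpq0 hpq.le _)
      _ ≤ _ := by
          rw [← Finset.mul_sum]
          exact mul_le_mul_of_nonneg_left (sum_compProb_le _ hpq0 hpq.le) hε0
  refine (sub_le_sub_left hsum 1).trans ?_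
  rw [sub_le_iff_le_add, ← aux_total (kSets n k) p]
  simp only [compProb, binomProb]
  rw [Finset.sum_comm, ← Finset.sum_add_distrib]
  apply Finset.sum_le_sum
  intro H hH
  have hw : 0 ≤ p ^ H.card * (1 - p) ^ ((kSets n k).card - H.card) := by
    have h1 : 0 ≤ 1 - p := by linarith
    positivity
  have hnn : ∀ C : Finset (Finset (Fin n)), 0 ≤ (if IsJComponent n j H C then
      p ^ H.card * (1 - p) ^ ((kSets n k).card - H.card) else 0) := by
    intro C
    split_ifs
    · exact hw
    · exact le_rfl
  split_ifs with hQ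
  · exact le_add_of_nonneg_right (Finset.sum_nonneg fun C _ => hnn C)
  · rw [zero_add]
    push Not at hQ
    obtain ⟨C1, C2, h1, h2, -, -, hne⟩ := hQ
    have hdis : Disjoint C1 C2 := by
      rw [Finset.disjoint_left]
      intro J hJ1 hJ2
      exact hne (comp_eq h1 h2 hJ1 hJ2)
    have hcard : C1.card + C2.card ≤ n.choose j := by
      rw [← Finset.card_union_of_disjoint hdis]
      have : (Finset.powersetCard j (Finset.univ : Finset (Fin n))).card = n.choose j := by
        rw [Finset.card_powersetCard, Finset.card_univ, Fintype.card_fin]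
      rw [← this]
      apply Finset.card_le_card
      intro J hJ
      rw [Finset.mem_powersetCard]
      refine ⟨Finset.subset_univ _, ?_⟩
      rcases Finset.mem_union.1 hJ with h | h
      · exact h1.2.1 J h
      · exact h2.2.1 J h
    obtain ⟨C, hC, hCs⟩ : ∃ C, IsJComponent n j H C ∧ 2 * C.card ≤ n.choose j := by
      rcases le_total C1.card C2.card with h | h
      · exact ⟨C1, h1, by omega⟩
      · exact ⟨C2, h2, by omega⟩
    have hCmem : C ∈ (Finset.univ : Finset (Finset (Finset (Fin n)))).filter
        (fun C => 2 * C.card ≤ n.choose j) := Finset.mem_filter.2 ⟨Finset.mem_univ C, hCs⟩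
    have := Finset.single_le_sum (f := fun C => (if IsJComponent n j H C then
      p ^ H.card * (1 - p) ^ ((kSets n k).card - H.card) else 0)) (fun C _ => hnn C)
      hCmem
    simp only [if_pos hC] at this
    exact this

lemma iso_asymp (k j : ℕ) (hjk : j + 1 ≤ k) : ∃ c : ℝ, 0 < c ∧ ∀ n : ℕ, 4 * k ≤ n →
    ∀ C : Finset (Finset (Fin n)), (∀ J ∈ C, J.card = j) → 2 * C.card ≤ n.choose j →
      c * C.card * n.choose (k - j) ≤ (mixK k j C).card := by
  have hE : 0 < (((2 * k).choose j : ℕ) : ℝ) * ((2 * k).choose j : ℕ) := by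
    have : 0 < (2 * k).choose j := Nat.choose_pos (by omega)
    positivity
  set E := (((2 * k).choose j : ℕ) : ℝ) * ((2 * k).choose j : ℕ) with hEd
  refine ⟨1 / 2 * ((1 / 2) ^ j / (j.factorial : ℝ)) *
    ((1 / 2) ^ (2 * k - 2 * j) / ((2 * k - 2 * j).factorial : ℝ)) / E, by positivity, ?_⟩
  intro n hn C hC hCs
  have hiso := iso hjk (by omega : 2 * k ≤ n) hC
  have hiso' : (C.card : ℝ) * ((n.choose j - C.card : ℕ) : ℝ) *
      ((n - 2 * j).choose (2 * k - 2 * j) : ℕ)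
      ≤ (mixK k j C).card * ((n - k).choose k : ℕ) * E := by
    rw [hEd]; exact_mod_cast hiso
  have hn0 : (0 : ℝ) < n := by
    have : 0 < n := by omega
    exact_mod_cast this
  have hN : 1 / 2 * (n.choose j : ℝ) ≤ ((n.choose j - C.card : ℕ) : ℝ) := by
    rw [Nat.cast_sub (by omega)]
    have : (2 : ℝ) * C.card ≤ n.choose j := by exact_mod_cast hCs
    linarith
  have hlow : ∀ a m : ℕ, a + m ≤ 2 * k → ((n : ℝ) / 2) ^ m / (m.factorial : ℝ) ≤
      ((n - a).choose m : ℕ) := by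
    intro a m ham
    refine le_trans ?_ (Nat.pow_le_choose m (n - a))
    apply div_le_div_of_nonneg_right _ (by positivity)
    apply pow_le_pow_left₀ (by positivity)
    have h1 : n ≤ 2 * (n - a + 1 - m) := by omega
    have h2 : (n : ℝ) ≤ 2 * ((n - a + 1 - m : ℕ) : ℝ) := by exact_mod_cast h1
    linarith
  have h1 := hlow 0 j (by omega)
  rw [Nat.sub_zero] at h1
  have h2 := hlow (2 * j) (2 * k - 2 * j) (by omega)
  have hD : (((n - k).choose k : ℕ) : ℝ) ≤ (n : ℝ) ^ k := by
    have := (Nat.choose_le_choose k (Nat.sub_le n k)).trans (Nat.choose_le_pow n k)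
    exact_mod_cast this
  have hM : ((n.choose (k - j) : ℕ) : ℝ) ≤ (n : ℝ) ^ (k - j) := by
    exact_mod_cast Nat.choose_le_pow n (k - j)
  have hpos : 0 < (n : ℝ) ^ k * E := by positivity
  refine le_of_mul_le_mul_right ?_ hpos
  set A1 := (1 / 2 : ℝ) ^ j / (j.factorial : ℝ) with hA1
  set A2 := (1 / 2 : ℝ) ^ (2 * k - 2 * j) / ((2 * k - 2 * j).factorial : ℝ) with hA2
  have hA1p : 0 < A1 := by positivity
  have hA2p : 0 < A2 := by positivity
  have e1 : ((n : ℝ) / 2) ^ j / (j.factorial : ℝ) = A1 * (n : ℝ) ^ j := by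
    rw [hA1, div_pow, div_pow, one_pow]; ring
  have e2 : ((n : ℝ) / 2) ^ (2 * k - 2 * j) / ((2 * k - 2 * j).factorial : ℝ)
      = A2 * (n : ℝ) ^ (2 * k - 2 * j) := by
    rw [hA2, div_pow, div_pow, one_pow]; ring
  rw [e1] at h1
  rw [e2] at h2
  calc 1 / 2 * A1 * A2 / E * C.card * n.choose (k - j) * ((n : ℝ) ^ k * E)
      = 1 / 2 * A1 * A2 * C.card * n.choose (k - j) * (n : ℝ) ^ k := by
        field_simp
    _ ≤ 1 / 2 * A1 * A2 * C.card * (n : ℝ) ^ (k - j) * (n : ℝ) ^ k := by gcongr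
    _ = (C.card : ℝ) * (1 / 2 * (A1 * (n : ℝ) ^ j)) * (A2 * (n : ℝ) ^ (2 * k - 2 * j)) := by
        have : (n : ℝ) ^ (k - j) * (n : ℝ) ^ k = (n : ℝ) ^ j * (n : ℝ) ^ (2 * k - 2 * j) := by
          rw [← pow_add, ← pow_add]
          congr 1
          omega
        calc _ = 1 / 2 * A1 * A2 * C.card * ((n : ℝ) ^ (k - j) * (n : ℝ) ^ k) := by ring
          _ = _ := by rw [this]; ring
    _ ≤ (C.card : ℝ) * ((n.choose j - C.card : ℕ) : ℝ) *
      ((n - 2 * j).choose (2 * k - 2 * j) : ℕ) := by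
        have : 1 / 2 * (A1 * (n : ℝ) ^ j) ≤ ((n.choose j - C.card : ℕ) : ℝ) := by linarith
        gcongr
    _ ≤ (mixK k j C).card * ((n - k).choose k : ℕ) * E := hiso'
    _ ≤ (mixK k j C).card * ((n : ℝ) ^ k) * E := by gcongr
    _ = _ := by ring

lemma choose_asymp (a m : ℕ) (δ : ℝ) (hδ : δ < 1) :
    ∀ᶠ n : ℕ in atTop, δ * (n.choose m : ℝ) ≤ ((n - a).choose m : ℕ) := by
  have h1 : Tendsto (fun n : ℕ => (1 - ((a + m : ℕ) : ℝ) / (n : ℝ)) ^ m) atTop (nhds 1) := by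
    have := (tendsto_const_div_atTop_nhds_zero_nat ((a + m : ℕ) : ℝ)).const_sub 1
    simpa using this.pow m
  filter_upwards [h1.eventually (lt_mem_nhds hδ), eventually_ge_atTop (a + m + 1)] with n hn hna
  have hn0 : (0 : ℝ) < n := by
    have : 0 < n := by omega
    exact_mod_cast this
  rcases lt_or_ge δ 0 with hneg | hpos
  · have : δ * (n.choose m : ℝ) ≤ 0 := mul_nonpos_of_nonpos_of_nonneg hneg.le (by positivity)
    exact this.trans (by positivity)
  refine le_trans ?_ (Nat.pow_le_choose m (n - a))
  refine (mul_le_mul_of_nonneg_left (Nat.choose_le_pow_div m n) hpos).trans ?_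
  rw [← mul_div_assoc]
  apply div_le_div_of_nonneg_right _ (by positivity)
  have e1 : ((n : ℝ) - ((a + m : ℕ) : ℝ)) ^ m = (1 - ((a + m : ℕ) : ℝ) / (n : ℝ)) ^ m * (n : ℝ) ^ m := by
    rw [← mul_pow]
    congr 1
    field_simp
  calc δ * (n : ℝ) ^ m ≤ (1 - ((a + m : ℕ) : ℝ) / (n : ℝ)) ^ m * (n : ℝ) ^ m := by gcongr
    _ = ((n : ℝ) - ((a + m : ℕ) : ℝ)) ^ m := e1.symm
    _ ≤ _ := by
      have h3 : n - (a + m) ≤ n - a + 1 - m := by omega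
      have h4 : ((n - (a + m) : ℕ) : ℝ) ≤ ((n - a + 1 - m : ℕ) : ℝ) := by exact_mod_cast h3
      rw [Nat.cast_sub (by omega)] at h4
      apply pow_le_pow_left₀ _ h4
      have : ((a + m : ℕ) : ℝ) ≤ n := by
        have : a + m ≤ n := by omega
        exact_mod_cast this
      linarith

lemma exp_asymp (θ τ : ℝ) (h : τ < θ) :
    ∀ᶠ x : ℝ in atTop, x * Real.exp (-θ * (x - 1)) ≤ Real.exp (-τ * x) := by
  have h1 := tendsto_rpow_mul_exp_neg_mul_atTop_nhds_zero 1 (θ - τ) (by linarith)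
  have h2 : (0 : ℝ) < Real.exp (-θ) := Real.exp_pos _
  filter_upwards [h1.eventually (gt_mem_nhds h2)] with x hx
  rw [Real.rpow_one] at hx
  have e1 : x * Real.exp (-θ * (x - 1)) =
      x * Real.exp (-(θ - τ) * x) * (Real.exp θ * Real.exp (-τ * x)) := by
    rw [mul_assoc, ← Real.exp_add, ← Real.exp_add]
    congr 2; ring
  have e2 : Real.exp (-τ * x) = Real.exp (-θ) * (Real.exp θ * Real.exp (-τ * x)) := by
    rw [← Real.exp_add, ← Real.exp_add]
    congr 1; ring
  rw [e1]
  conv_rhs => rw [e2]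
  exact mul_le_mul_of_nonneg_right hx.le (by positivity)

/-- Core estimate for one candidate component. -/
lemma core_bound (p M L θ b : ℝ) (s m : ℕ) (hM : 1 < M) (hL : 1 ≤ L) (hpL : p = L / M) (hp1 : p ≤ 1)
    (hm : θ * s * M ≤ m) (hb : L * Real.exp (-θ * (L - 1)) ≤ Real.exp (-b)) :
    (1 - p) ^ m ≤ Real.exp (-b * s) * ((1 / L) ^ s * (1 - p * (1 / L)) ^ m) := by
  have hM0 : 0 < M := by linarith
  have hL0 : 0 < L := by linarith
  have hq : p * (1 / L) = 1 / M := by rw [hpL]; field_simp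
  rw [hq]
  have hM1 : 1 / M < 1 := by rw [div_lt_one hM0]; exact hM
  have hM2 : 0 < 1 / M := by positivity
  set r := 1 / M with hr
  have hpr : p = L * r := by rw [hpL, hr]; ring
  have h1 : 1 - p ≤ (1 - r) * Real.exp (-(p - r)) := by
    have h2 : 1 - (p - r) ≤ Real.exp (-(p - r)) := by
      have := Real.add_one_le_exp (-(p - r)); linarith
    have h3 : 1 - p ≤ (1 - r) * (1 - (p - r)) := by
      have : r ≤ p := by rw [hpr]; nlinarith
      nlinarith
    exact h3.trans (mul_le_mul_of_nonneg_left h2 (by linarith))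
  have h4 : (1 - p) ^ m ≤ (1 - r) ^ m * Real.exp (-(p - r) * m) := by
    refine (pow_le_pow_left₀ (by linarith) h1 m).trans (le_of_eq ?_)
    rw [mul_pow, ← Real.exp_nat_mul, mul_comm (m : ℝ)]
  have h5 : Real.exp (-(p - r) * m) ≤ Real.exp (-θ * (L - 1)) ^ s := by
    rw [← Real.exp_nat_mul]
    apply Real.exp_le_exp.2
    have e : p - r = (L - 1) / M := by rw [hpr, hr]; ring
    have h6 : θ * s ≤ m / M := by rw [le_div_iff₀ hM0]; exact hm
    have h7 : (p - r) * m = (L - 1) * (m / M) := by rw [e]; ring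
    have := mul_le_mul_of_nonneg_left h6 (by linarith : 0 ≤ L - 1)
    nlinarith
  have h8 : Real.exp (-θ * (L - 1)) ≤ Real.exp (-b) * (1 / L) := by
    rw [mul_one_div, le_div_iff₀ hL0]; linarith
  calc (1 - p) ^ m ≤ (1 - r) ^ m * Real.exp (-(p - r) * m) := h4
    _ ≤ (1 - r) ^ m * (Real.exp (-b) * (1 / L)) ^ s := by
        apply mul_le_mul_of_nonneg_left _ (pow_nonneg (by linarith) _)
        exact h5.trans (pow_le_pow_left₀ (Real.exp_pos _).le h8 s)
    _ = _ := by
        rw [mul_pow, ← Real.exp_nat_mul, show (s : ℝ) * -b = -b * s by ring]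
        ring

/-- **Uniqueness of the non-trivial component.** For `k ≥ 3`, `1 ≤ j ≤ k-1`, `ω = log log n`,
and `(j log n - ω)/C(n,k-j) ≤ p ≤ (j log n + ω)/C(n,k-j)`, with probability at least
`1 - 3·n^{-12j/7}` (for sufficiently large `n`) the random hypergraph `H^k(n,p)` has at most one
non-trivial `j`-component, i.e. any two `j`-components containing more than one `j`-set
coincide. -/
theorem unique_nontrivial_component (k j : ℕ) (hk : 3 ≤ k) (hj : 1 ≤ j) (hjk : j ≤ k - 1)
    (p : ℕ → ℝ)
    (hp : ∀ᶠ n : ℕ in atTop,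
      ((j : ℝ) * Real.log n - Real.log (Real.log n)) / (n.choose (k - j) : ℝ) ≤ p n ∧
        p n ≤ ((j : ℝ) * Real.log n + Real.log (Real.log n)) / (n.choose (k - j) : ℝ)) :
    ∀ᶠ n : ℕ in atTop,
      1 - 3 * (n : ℝ) ^ (-(12 * (j : ℝ)) / 7) ≤
        binomProb n k (p n) (fun H =>
          ∀ C1 C2 : Finset (Finset (Fin n)),
            IsJComponent n j H C1 → IsJComponent n j H C2 →
            2 ≤ C1.card → 2 ≤ C2.card → C1 = C2) := by
  have hjk' : j + 1 ≤ k := by omega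
  have hj1 : (1 : ℝ) ≤ j := by exact_mod_cast hj
  obtain ⟨c, hc, hiso⟩ := iso_asymp k j hjk'
  obtain ⟨S0, hS0⟩ := exists_nat_ge (12 / c)
  have hlogT : Tendsto (fun n : ℕ => Real.log (n : ℝ)) atTop atTop :=
    Real.tendsto_log_atTop.comp tendsto_natCast_atTop_atTop
  -- log log n ≤ (1/40) log n
  have hll : ∀ᶠ x : ℝ in atTop, Real.log x ≤ 1 / 40 * x := by
    have := Real.isLittleO_log_id_atTop.def (show (0 : ℝ) < 1 / 40 by norm_num)
    filter_upwards [this, eventually_ge_atTop 0] with x hx hx0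
    simp only [id, Real.norm_eq_abs, abs_of_nonneg hx0] at hx
    exact (le_abs_self _).trans hx
  have hLT : Tendsto (fun x : ℝ => 39 / 40 * x) atTop atTop :=
    tendsto_id.const_mul_atTop (by norm_num)
  have hsub : ∀ᶠ n : ℕ in atTop, 2 * (j : ℝ) * Real.log n ≤ n - 1 := by
    have := (Real.isLittleO_log_id_atTop.comp_tendsto tendsto_natCast_atTop_atTop).def
      (show (0 : ℝ) < 1 / (4 * j) by positivity)
    filter_upwards [this, eventually_ge_atTop 2] with n hn hn2
    have hn2' : (2 : ℝ) ≤ n := by exact_mod_cast hn2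
    simp only [Function.comp, id, Real.norm_eq_abs] at hn
    rw [abs_of_nonneg (by linarith : (0 : ℝ) ≤ n)] at hn
    have h1 := (le_abs_self _).trans hn
    have h2 : 2 * (j : ℝ) * Real.log n ≤ 2 * j * (1 / (4 * j) * n) := by gcongr
    have h3 : 2 * (j : ℝ) * (1 / (4 * j) * n) = n / 2 := by field_simp; norm_num
    linarith
  obtain ⟨x1, hx1⟩ := eventually_atTop.1 (exp_asymp (39 / 40) ((39 / 40) ^ 2) (by norm_num))
  obtain ⟨x2, hx2⟩ := eventually_atTop.1 (exp_asymp c (c / 2) (by linarith))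
  filter_upwards [hp, hlogT.eventually hll, hsub, hlogT.eventually_ge_atTop 2,
    (hLT.comp hlogT).eventually_ge_atTop x1, (hLT.comp hlogT).eventually_ge_atTop x2,
    eventually_ge_atTop (4 * k), choose_asymp (S0 * j) (k - j) (39 / 40) (by norm_num)]
    with n hpn hlln hsubn hlog2 hb1 hb2 hn4 hch
  obtain ⟨hpl, hpu⟩ := hpn
  simp only [Function.comp] at hb1 hb2
  set ℓ := Real.log (n : ℝ) with hℓ
  have hn0 : (0 : ℝ) < n := by
    have : 0 < n := by omega
    exact_mod_cast this
  have hnM : n ≤ n.choose (k - j) := by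
    have := le_choose_aux n (k - j) (by omega) (by omega)
    exact this
  have hnM' : (n : ℝ) ≤ (n.choose (k - j) : ℝ) := by exact_mod_cast hnM
  have hn12 : (12 : ℝ) ≤ n := by
    have : 12 ≤ n := by omega
    exact_mod_cast this
  set M := (n.choose (k - j) : ℝ) with hM
  have hM1 : 1 < M := by linarith
  have hM0 : 0 < M := by linarith
  set L := p n * M with hL
  have hjℓ : ℓ ≤ j * ℓ := by nlinarith
  have hLl : j * ℓ - Real.log ℓ ≤ L := by rw [div_le_iff₀ hM0] at hpl; exact hpl
  have hLu : L ≤ j * ℓ + Real.log ℓ := by rw [le_div_iff₀ hM0] at hpu; exact hpu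
  have hL1 : 39 / 40 * (j * ℓ) ≤ L := by linarith
  have hL1' : 39 / 40 * ℓ ≤ L := by linarith
  have hL2 : 1 ≤ L := by linarith
  have hL0 : 0 < L := by linarith
  have hpL : p n = L / M := by rw [hL]; field_simp
  have hLM : L ≤ M := by linarith
  have hp0 : 0 ≤ p n := by rw [hpL]; positivity
  have hp1 : p n ≤ 1 := by rw [hpL, div_le_one hM0]; exact hLM
  have hq : p n * (1 / L) = 1 / M := by rw [hpL]; field_simp
  have hmain := finite_main (n := n) hk hj hjk' (p n) (1 / L) (Real.exp (-(19 / 7) * (j * ℓ)))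
    hp0 hp1 (by positivity) (by rw [div_le_one hL0]; exact hL2)
    (by rw [hq, div_lt_one hM0]; exact hM1) (Real.exp_pos _).le ?_
  · refine le_trans ?_ hmain
    rw [hq]
    have h1 : (n.choose k : ℝ) * (1 / M) ≤ (n : ℝ) ^ j := by
      rw [mul_one_div, div_le_iff₀ hM0]
      have h2 : n.choose k ≤ n ^ j * n.choose (k - j) := by
        calc n.choose k ≤ n.choose k * k.choose j :=
              Nat.le_mul_of_pos_right _ (Nat.choose_pos (by omega))
          _ = n.choose j * (n - j).choose (k - j) := Nat.choose_mul (by omega)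
          _ ≤ n ^ j * n.choose (k - j) :=
              Nat.mul_le_mul (Nat.choose_le_pow n j) (Nat.choose_le_choose _ (Nat.sub_le _ _))
      rw [hM]
      exact_mod_cast h2
    have h3 : (n : ℝ) ^ j = Real.exp (j * ℓ) := by
      rw [Real.exp_nat_mul, hℓ, Real.exp_log hn0]
    have h4 : (n : ℝ) ^ (-(12 * (j : ℝ)) / 7) = Real.exp (-(12 / 7) * (j * ℓ)) := by
      rw [Real.rpow_def_of_pos hn0]
      congr 1
      ring
    have h5 : Real.exp (-(19 / 7) * (j * ℓ)) * ((n.choose k : ℝ) * (1 / M)) ≤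
        Real.exp (-(12 / 7) * (j * ℓ)) := by
      calc _ ≤ Real.exp (-(19 / 7) * (j * ℓ)) * Real.exp (j * ℓ) := by
            rw [← h3]
            exact mul_le_mul_of_nonneg_left h1 (Real.exp_pos _).le
        _ = _ := by rw [← Real.exp_add]; congr 1; ring
    rw [h4]
    have := Real.exp_pos (-(12 / 7) * (j * ℓ))
    linarith
  · intro C hC hC3 hCs
    have hC3' : (3 : ℝ) ≤ C.card := by exact_mod_cast hC3
    have hq0 : 0 ≤ (1 / L) ^ C.card * (1 - p n * (1 / L)) ^ (mixK k j C).card := by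
      have : 0 ≤ 1 - p n * (1 / L) := by
        rw [hq, sub_nonneg, div_le_one hM0]; exact hM1.le
      positivity
    have hjℓ0 : 0 ≤ j * ℓ := by linarith
    rcases le_or_gt C.card S0 with hs | hs
    · have hm : (39 / 40 : ℝ) * C.card * M ≤ (mixK k j C).card := by
        have h1 := mix_small hj hjk' hC
        have h2 : (n - S0 * j).choose (k - j) ≤ (n - C.card * j).choose (k - j) :=
          Nat.choose_le_choose _ (Nat.sub_le_sub_left (Nat.mul_le_mul_right j hs) n)
        have h3 : ((C.card * (n - S0 * j).choose (k - j) : ℕ) : ℝ) ≤ (mixK k j C).card := by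
          exact_mod_cast (Nat.mul_le_mul_left C.card h2).trans h1
        push_cast at h3
        have h4 := mul_le_mul_of_nonneg_left hch (Nat.cast_nonneg C.card : (0 : ℝ) ≤ C.card)
        linarith
      refine (core_bound (p n) M L (39 / 40) ((39 / 40) ^ 2 * L) C.card _ hM1 hL2 hpL hp1 hm
        (by have := hx1 L (by linarith); rwa [neg_mul ((39 / 40 : ℝ) ^ 2)] at this)).trans ?_
      apply mul_le_mul_of_nonneg_right _ hq0
      apply Real.exp_le_exp.2
      have : (39 / 40) ^ 2 * (39 / 40 * (j * ℓ)) * 3 ≤ (39 / 40) ^ 2 * L * C.card := by gcongr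
      nlinarith
    · have hm := hiso n hn4 C hC hCs
      refine (core_bound (p n) M L c (c / 2 * L) C.card _ hM1 hL2 hpL hp1 hm
        (by have := hx2 L (by linarith); rwa [neg_mul (c / 2)] at this)).trans ?_
      apply mul_le_mul_of_nonneg_right _ hq0
      apply Real.exp_le_exp.2
      have hs' : 12 / c ≤ (C.card : ℝ) := hS0.trans (by exact_mod_cast hs.le)
      have h1 : c / 2 * (39 / 40 * (j * ℓ)) * (12 / c) ≤ c / 2 * L * C.card := by gcongr
      have h2 : c / 2 * (39 / 40 * (j * ℓ)) * (12 / c) = 6 * (39 / 40) * (j * ℓ) := by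
        field_simp; norm_num
      nlinarith

end
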